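/- For every n ≥ 1, 2^n · r_3(ℤ_3^n) ≤ r_6(ℤ_6^n); i.e., there exists a subset of (ℤ/6ℤ)^n of size 2^n·r_3(ℤ_3^n) containing no 6-term arithmetic progression of pairwise distinct elements. -/

import Mathlib

/-- `A` contains a `k`-term arithmetic progression `a, a+d, …, a+(k-1)d`
whose terms are pairwise distinct. -/
def IsDistinctAP {G : Type*} [AddCommGroup G] (k : ℕ) (A : Set G) : Prop :=
  ∃ a d : G, (∀ i : Fin k, a + (i : ℕ) • d ∈ A) ∧
    Function.Injective fun i : Fin k => a + (i : ℕ) • d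

/-- `rAP k m n` is the largest cardinality of a subset of `(ℤ/mℤ)^n` containing
no `k`-term arithmetic progression of pairwise distinct elements. -/
noncomputable def rAP (k m n : ℕ) : ℕ :=
  sSup {s : ℕ | ∃ A : Finset (Fin n → ZMod m),
    ¬ IsDistinctAP k (A : Set (Fin n → ZMod m)) ∧ A.card = s}

/-!
Let `φ : G → H` be a homomorphism whose kernel is annihilated by `q`, and pull back a set `A ⊆ H`
to `G`. A progression of more than `q` distinct terms in `φ ⁻¹' A` has a direction `d` with
`q • d ≠ 0`, so `φ d ≠ 0`, and the image progression in `A` has as many distinct initial terms as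
the order of `φ d`. For the reduction `(ℤ/qm)^n → (ℤ/m)^n` this order is at least the smallest prime
factor of `m`, while pulling back multiplies the size of `A` by `q ^ n`. The case `q = 2`, `m = 3`
is the theorem.
-/

open Finset Function

section Progressions

variable {G H : Type*} [AddCommGroup G] [AddCommGroup H]

lemma injective_add_nsmul_of_le_addOrderOf {k : ℕ} {d : G} (hk : k ≤ addOrderOf d) (a : G) :
    Injective fun i : Fin k => a + (i : ℕ) • d := fun i j hij =>
  Fin.ext <| nsmul_injOn_Iio_addOrderOf (i.isLt.trans_le hk) (j.isLt.trans_le hk)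
    (add_left_cancel hij)

lemma nsmul_ne_zero_of_injective_add_nsmul {k q : ℕ} {a d : G}
    (hinj : Injective fun i : Fin k => a + (i : ℕ) • d) (hq : q ≠ 0) (hqk : q < k) :
    q • d ≠ 0 := by
  intro hqd
  have hterms : (⟨q, hqk⟩ : Fin k) = ⟨0, Nat.zero_lt_of_lt hqk⟩ := hinj (by simp [hqd])
  exact hq (congrArg Fin.val hterms)

lemma isDistinctAP_of_isDistinctAP_preimage {j k q : ℕ} {φ : G →+ H} {A : Set H}
    (hker : ∀ x, φ x = 0 → q • x = 0) (horder : ∀ y : H, y ≠ 0 → j ≤ addOrderOf y)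
    (hq : q ≠ 0) (hjk : j ≤ k) (hqk : q < k) (hAP : IsDistinctAP k (φ ⁻¹' A)) :
    IsDistinctAP j A := by
  obtain ⟨a, d, hmem, hinj⟩ := hAP
  have hd : φ d ≠ 0 := fun h => nsmul_ne_zero_of_injective_add_nsmul hinj hq hqk (hker d h)
  refine ⟨φ a, φ d, fun i => ?_, injective_add_nsmul_of_le_addOrderOf (horder _ hd) _⟩
  simpa using hmem (i.castLE hjk)

end Progressions

lemma card_filter_map_mem_eq_card_fiber_mul {G H : Type*} [AddGroup G] [Fintype G] [AddMonoid H]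
    [DecidableEq H] {φ : G →+ H} (hφ : Surjective φ) (A : Finset H) :
    #{x | φ x ∈ A} = #{x | φ x = 0} * #A := by
  have hfiber (y : H) : #{x | φ x = y} = #{x | φ x = 0} :=
    AddMonoidHom.card_fiber_eq_of_mem_range φ (hφ y) (hφ 0)
  calc #{x | φ x ∈ A} = ∑ y ∈ A, #{x | φ x = y} := by
        rw [sum_card_fiberwise_eq_card_filter]
    _ = #{x | φ x = 0} * #A := by
        simp only [hfiber, sum_const, smul_eq_mul, mul_comm]

section Reduction

/-- The coordinatewise reduction modulo `m`, as a homomorphism `(ℤ/qm)^n → (ℤ/m)^n`. -/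
def reductionHom (q m n : ℕ) : (Fin n → ZMod (q * m)) →+ (Fin n → ZMod m) :=
  (ZMod.castHom (dvd_mul_left m q) (ZMod m)).toAddMonoidHom.compLeft (Fin n)

variable {q m n : ℕ}

lemma reductionHom_surjective : Surjective (reductionHom q m n) :=
  (ZMod.castHom_surjective (dvd_mul_left m q)).comp_left

lemma nsmul_eq_zero_of_castHom_eq_zero {x : ZMod (q * m)}
    (hx : ZMod.castHom (dvd_mul_left m q) (ZMod m) x = 0) : q • x = 0 := by
  obtain ⟨z, rfl⟩ := ZMod.intCast_surjective x
  have hmz : (m : ℤ) ∣ z := by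
    rwa [map_intCast, ZMod.intCast_zmod_eq_zero_iff_dvd] at hx
  have hqmz : ((q * m : ℕ) : ℤ) ∣ q * z := by
    simpa only [Nat.cast_mul] using mul_dvd_mul_left (q : ℤ) hmz
  simpa using (ZMod.intCast_zmod_eq_zero_iff_dvd _ _).2 hqmz

lemma nsmul_eq_zero_of_reductionHom_eq_zero {x : Fin n → ZMod (q * m)}
    (hx : reductionHom q m n x = 0) : q • x = 0 :=
  funext fun i => nsmul_eq_zero_of_castHom_eq_zero (congrFun hx i)

lemma card_filter_reductionHom_mem [NeZero q] [NeZero m] (A : Finset (Fin n → ZMod m)) :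
    #{x | reductionHom q m n x ∈ A} = q ^ n * #A := by
  have hfiber : #{x | reductionHom q m n x = 0} = q ^ n := by
    have huniv := card_filter_map_mem_eq_card_fiber_mul
      (reductionHom_surjective (q := q) (m := m) (n := n)) univ
    refine Nat.eq_of_mul_eq_mul_right (pow_pos (NeZero.pos m) n) ?_
    simpa [ZMod.card, mul_pow] using huniv.symm
  rw [card_filter_map_mem_eq_card_fiber_mul reductionHom_surjective, hfiber]

end Reduction

lemma minFac_le_addOrderOf_pi_zmod {ι : Type*} {m : ℕ} [NeZero m] {y : ι → ZMod m}
    (hy : y ≠ 0) : m.minFac ≤ addOrderOf y := by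
  have hdvd : addOrderOf y ∣ m := addOrderOf_dvd_of_nsmul_eq_zero (by ext; simp)
  have hne_one : addOrderOf y ≠ 1 := mt AddMonoid.addOrderOf_eq_one_iff.1 hy
  have hpos : 0 < addOrderOf y := Nat.pos_of_dvd_of_pos hdvd (NeZero.pos m)
  exact Nat.minFac_le_of_dvd (by omega) hdvd

lemma mul_rAP_le {b c k m n : ℕ} (hb : ∀ A : Finset (Fin n → ZMod m),
      ¬ IsDistinctAP k (A : Set (Fin n → ZMod m)) → c * #A ≤ b) :
    c * rAP k m n ≤ b := by
  rcases c.eq_zero_or_pos with rfl | hc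
  · simp
  · rw [mul_comm, ← Nat.le_div_iff_mul_le hc]
    refine csSup_le' ?_
    rintro _ ⟨A, hA, rfl⟩
    rw [Nat.le_div_iff_mul_le hc, mul_comm]
    exact hb A hA

lemma card_le_rAP {k m n : ℕ} [NeZero m] {A : Finset (Fin n → ZMod m)}
    (hA : ¬ IsDistinctAP k (A : Set (Fin n → ZMod m))) : #A ≤ rAP k m n := by
  refine le_csSup ⟨Fintype.card (Fin n → ZMod m), ?_⟩ ⟨A, hA, rfl⟩
  rintro _ ⟨B, -, rfl⟩
  exact card_le_univ B

theorem r6_lower_general {j k q m : ℕ} [NeZero q] [NeZero m] (n : ℕ) (hjm : j ≤ m.minFac)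
    (hjk : j ≤ k) (hqk : q < k) : q ^ n * rAP j m n ≤ rAP k (q * m) n := by
  refine mul_rAP_le fun A hA => ?_
  rw [← card_filter_reductionHom_mem]
  refine card_le_rAP fun hAP => hA ?_
  refine isDistinctAP_of_isDistinctAP_preimage (φ := reductionHom q m n)
    (fun _ => nsmul_eq_zero_of_reductionHom_eq_zero)
    (fun _ hy => hjm.trans (minFac_le_addOrderOf_pi_zmod hy)) (NeZero.ne q) hjk hqk ?_
  simpa [Set.preimage] using hAP

theorem r6_lower (n : ℕ) (hn : 1 ≤ n) : 2 ^ n * rAP 3 3 n ≤ rAP 6 6 n :=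
  r6_lower_general n Nat.prime_three.minFac_eq.ge (by norm_num) (by norm_num)
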